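/- arXiv:2407.14647 — 3 statements merged into one kernel-verified Lean document; each statement's English description precedes it below -/
import Mathlib

section
/- Let I be a finite type and ξ a square matrix of type (I,I) with entries in a commutative ring R. For all i, j ∈ I, the (i,j)-entry of the adjugate matrix of ξ (i.e. the cofactor κ_{j,i}) equals ∑_{τ ∈ Perm(I), τ(j) = i} (-1)^{|I| + c(τ)} · ∏_{v ∈ I, v ≠ j} ξ(v, τ(v)), where c(τ) is the number of orbits of τ on I (cycles including fixed points). -/
attribute [local instance] Classical.propDecidable

/-- The number of orbits of a permutation `σ` on a finite type `I`, i.e. the number of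
cycles in the cycle decomposition of `σ`, counting fixed points as cycles of length one. -/
noncomputable def orbitCount {I : Type*} [Fintype I] (σ : Equiv.Perm I) : ℕ :=
  Multiset.card σ.cycleType + (Fintype.card I - σ.support.card)

/-!
The `(i, j)` entry of the adjugate is the determinant of the matrix whose `j`-th row is replaced by
the basis vector `eᵢ`. In its Leibniz expansion the factor from row `j` selects the permutations `τ`
with `τ j = i`. Finally `sign τ = (-1) ^ (|I| + c(τ))`: each fixed point contributes to both `|I|`
and `c(τ)`, so its contributions cancel modulo 2.
-/

open Equiv Finset

theorem card_add_orbitCount {I : Type*} [Fintype I] (σ : Perm I) :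
    Fintype.card I + orbitCount σ =
      σ.cycleType.sum + σ.cycleType.card + 2 * (Fintype.card I - σ.cycleType.sum) := by
  have hle : σ.cycleType.sum ≤ Fintype.card I := σ.sum_cycleType_le
  rw [orbitCount, ← σ.sum_cycleType]
  lia

theorem sign_eq_neg_one_pow_card_add_orbitCount {I : Type*} [Fintype I] (σ : Perm I) :
    Perm.sign σ = (-1) ^ (Fintype.card I + orbitCount σ) := by
  rw [card_add_orbitCount, pow_add, (even_two_mul _).neg_one_pow, mul_one, Perm.sign_of_cycleType]

theorem prod_updateRow_apply {m n M : Type*} [Fintype m] [DecidableEq m] [CommMonoid M]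
    (A : Matrix m n M) (j : m) (u : n → M) (f : m → n) :
    ∏ v, A.updateRow j u v (f v) = u (f j) * ∏ v ∈ univ.erase j, A v (f v) := by
  rw [← mul_prod_erase univ _ (mem_univ j), Matrix.updateRow_self]
  congr 1
  exact prod_congr rfl fun v hv => by rw [Matrix.updateRow_ne (ne_of_mem_erase hv)]

theorem det_updateRow_eq_sum {I R : Type*} [Fintype I] [DecidableEq I] [CommRing R]
    (A : Matrix I I R) (j : I) (u : I → R) :
    (A.updateRow j u).det =
      ∑ τ : Perm I, (Perm.sign τ : R) * (u (τ j) * ∏ v ∈ univ.erase j, A v (τ v)) := by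
  simp only [← Matrix.det_transpose (A.updateRow j u), Matrix.det_apply', Matrix.transpose_apply,
    prod_updateRow_apply]

theorem adjugate_apply_eq_sum_sign {I R : Type*} [Fintype I] [DecidableEq I] [CommRing R]
    (A : Matrix I I R) (i j : I) :
    A.adjugate i j =
      ∑ τ : Perm I with τ j = i, (Perm.sign τ : R) * ∏ v ∈ univ.erase j, A v (τ v) := by
  rw [Matrix.adjugate_apply, det_updateRow_eq_sum, sum_filter]
  simp only [Pi.single_apply, ite_mul, one_mul, zero_mul, mul_ite, mul_zero]

theorem stmt1 {I R : Type*} [Fintype I] [CommRing R] (ξ : Matrix I I R) (i j : I) :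
    ξ.adjugate i j = ∑ τ ∈ Finset.univ.filter (fun τ : Equiv.Perm I => τ j = i),
      (-1 : R) ^ (Fintype.card I + orbitCount τ) *
        ∏ v ∈ Finset.univ.erase j, ξ v (τ v) := by
  have sign_cast (τ : Perm I) :
      (Perm.sign τ : R) = (-1) ^ (Fintype.card I + orbitCount τ) := by
    simp [sign_eq_neg_one_pow_card_add_orbitCount]
  simp only [adjugate_apply_eq_sum_sign, sign_cast]
end

section
/- Let (X,d) be a finite metric space with n = |X| ≥ 2 points. Then for every natural number k with k ≤ n − 2: ∑_{x,y ∈ X} ∑_{τ ∈ Perm(X), τ(y) = x} (-1)^{c(τ)} · ( ∑_{v ≠ y} d(v, τ(v)) )^k = 0, where c(τ) is the number of orbits of τ on X (cycles including fixed points). -/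
attribute [local instance] Classical.propDecidable

/-!
Up to the global factor `(-1) ^ |X|`, the weight `(-1) ^ c(τ)` is the sign of `τ`. Expanding the
`k`-th power gives products of `k` factors, each involving a single value of `τ`. As `k ≤ |X| - 2`,
such a product ignores the values of `τ` at two points; exchanging these two values reverses the
sign of `τ`, so the terms cancel in pairs.
-/

section SignedSums

variable {I M : Type*} [Fintype I] [DecidableEq I] [AddCommGroup M]

theorem sum_sign_smul_eq_zero_of_mul_swap {y z : I} (hyz : y ≠ z) {F : Equiv.Perm I → M}
    (hF : ∀ τ, F (τ * Equiv.swap y z) = F τ) :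
    ∑ τ : Equiv.Perm I, Equiv.Perm.sign τ • F τ = 0 :=
  Finset.sum_involution (fun τ _ => τ * Equiv.swap y z)
    (fun τ _ => by simp [hF, Equiv.Perm.sign_mul, Equiv.Perm.sign_swap hyz])
    (fun τ _ _ => by simpa using hyz)
    (fun _ _ => Finset.mem_univ _)
    (fun τ _ => Equiv.mul_swap_mul_self y z τ)

theorem sum_sign_smul_eq_zero_of_dependsOn {F : (I → I) → M} {t : Finset I}
    (hF : DependsOn F t) (ht : t.card + 2 ≤ Fintype.card I) :
    ∑ τ : Equiv.Perm I, Equiv.Perm.sign τ • F τ = 0 := by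
  obtain ⟨y, hy, z, hz, hyz⟩ : ∃ y ∈ tᶜ, ∃ z ∈ tᶜ, y ≠ z := by
    rw [← Finset.one_lt_card, Finset.card_compl]
    omega
  rw [Finset.mem_compl] at hy hz
  refine sum_sign_smul_eq_zero_of_mul_swap hyz (F := fun τ => F τ) fun τ => hF fun v hv => ?_
  rw [Equiv.Perm.mul_apply, Equiv.swap_apply_of_ne_of_ne]
  · exact ne_of_mem_of_not_mem hv hy
  · exact ne_of_mem_of_not_mem hv hz

theorem sum_sign_smul_sum_pow_eq_zero {R : Type*} [CommRing R] (s : Finset I) (w : I → I → R)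
    {k : ℕ} (hk : k + 2 ≤ Fintype.card I) :
    ∑ τ : Equiv.Perm I, Equiv.Perm.sign τ • (∑ v ∈ s, w v (τ v)) ^ k = 0 := by
  simp only [Finset.sum_pow', Finset.smul_sum]
  rw [Finset.sum_comm]
  refine Finset.sum_eq_zero fun p _ => ?_
  have hp : DependsOn (fun f : I → I => ∏ i, w (p i) (f (p i))) (Finset.univ.image p) :=
    fun f g hfg => Finset.prod_congr rfl fun i _ => by
      rw [hfg (p i) (by simp)]
  have hcard : (Finset.univ.image p).card ≤ k := Finset.card_image_le.trans_eq (Finset.card_fin k)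
  exact sum_sign_smul_eq_zero_of_dependsOn hp (by omega)

end SignedSums

theorem neg_one_pow_orbitCount {I R : Type*} [Fintype I] [Ring R] (σ : Equiv.Perm I) :
    (-1 : R) ^ orbitCount σ = (-1) ^ Fintype.card I * ((Equiv.Perm.sign σ : ℤ) : R) := by
  have hle : σ.support.card ≤ Fintype.card I := Finset.card_le_univ _
  rw [Equiv.Perm.sign_of_cycleType, Equiv.Perm.sum_cycleType, orbitCount]
  push_cast
  rw [← pow_add]
  exact neg_one_pow_congr (by rw [Nat.even_iff, Nat.even_iff]; omega)

theorem stmt15_general {I R : Type*} [Fintype I] [CommRing R] (s : Finset I) (w : I → I → R)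
    {k : ℕ} (hk : k + 2 ≤ Fintype.card I) :
    ∑ τ : Equiv.Perm I, (-1) ^ orbitCount τ * (∑ v ∈ s, w v (τ v)) ^ k = 0 := by
  have hsign := sum_sign_smul_sum_pow_eq_zero s w hk
  simp only [Units.smul_def, zsmul_eq_mul] at hsign
  simp only [neg_one_pow_orbitCount, mul_assoc, ← Finset.mul_sum, hsign, mul_zero]

theorem stmt15 {X : Type*} [MetricSpace X] [Fintype X]
    (hn : 2 ≤ Fintype.card X) (k : ℕ) (hk : k ≤ Fintype.card X - 2) :
    ∑ x : X, ∑ y : X,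
      ∑ τ ∈ Finset.univ.filter (fun τ : Equiv.Perm X => τ y = x),
        (-1 : ℝ) ^ (orbitCount τ) *
          (∑ v ∈ Finset.univ.erase y, dist v (τ v)) ^ k = 0 := by
  rw [Finset.sum_comm]
  refine Finset.sum_eq_zero fun y _ => (Finset.sum_fiberwise _ _ _).trans ?_
  exact stmt15_general (Finset.univ.erase y) dist (by omega)
end

section
/- Let (X,d) be a finite metric space with points enumerated x_1, …, x_n. Then ∑_{x,y ∈ X} ∑_{τ ∈ Perm(X), τ(y) = x} (-1)^{n + c(τ)} · ( ∑_{v ≠ y} d(v, τ(v)) )^{n} = n! · C_n, where C_n = (1/2) ∑_{i ≠ j} det(N_{i,j}) with N_{i,j} the n×n matrix whose l-th column is the all-ones vector if l = i, the vector of squared distances (d(x_j, x_1)², …, d(x_j, x_n)²)ᵀ if l = j, and the vector (d(x_l, x_1), …, d(x_l, x_n))ᵀ otherwise, and c(τ) is the number of orbits of τ on X (cycles including fixed points). -/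
attribute [local instance] Classical.propDecidable

/-!
The signature of a permutation `τ` is its sign, so by the multinomial theorem the left-hand side is
a sum over the omitted point `y` and exponent vectors `k` on `X \ {y}` with `∑ k v = n` of
multinomial multiples of `det (d(x_v, x_r) ^ k v)`. Column `y` consists of ones, hence the
determinant vanishes as soon as `k v = 0` for another `v`. Otherwise all `n - 1` exponents are
positive with sum `n`: one of them is `2` and the others are `1`, and the multinomial coefficient is
`n! / 2`.
-/

open Equiv.Perm Finset Matrix
open scoped Nat

section PiAntidiag

variable {ι : Type*}

lemma injective_single_one : Function.Injective fun j : ι => (Pi.single j 1 : ι → ℕ) := by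
  intro i j hij
  by_contra h
  simpa [h] using congrFun hij i

lemma piAntidiag_one (s : Finset ι) :
    s.piAntidiag 1 = s.map ⟨fun j => Pi.single j 1, injective_single_one⟩ := by
  ext k
  simp only [mem_piAntidiag, mem_map, Function.Embedding.coeFn_mk]
  constructor
  · rintro ⟨hsum, hsupp⟩
    obtain ⟨j, hj, hkj⟩ := exists_ne_zero_of_sum_ne_zero (hsum.trans_ne one_ne_zero)
    have hsplit : k j + ∑ v ∈ s.erase j, k v = 1 := (add_sum_erase s k hj).trans hsum
    have hrest : ∑ v ∈ s.erase j, k v = 0 := by omega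
    refine ⟨j, hj, funext fun v => ?_⟩
    obtain rfl | hv := eq_or_ne v j
    · rw [Pi.single_eq_same]
      omega
    · rw [Pi.single_eq_of_ne hv]
      by_contra! hkv
      exact hkv.symm (sum_eq_zero_iff.1 hrest v (mem_erase.2 ⟨hv, hsupp v hkv.symm⟩))
  · rintro ⟨j, hj, rfl⟩
    refine ⟨by simp [hj], fun v hv => ?_⟩
    obtain rfl : v = j := by_contra fun h => hv (Pi.single_eq_of_ne h 1)
    exact hj

lemma sum_indicator_one_add (s : Finset ι) (k : ι → ℕ) :
    ∑ v ∈ s, ((s : Set ι).indicator 1 + k : ι → ℕ) v = #s + ∑ v ∈ s, k v := by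
  have hone : ∑ v ∈ s, (s : Set ι).indicator (1 : ι → ℕ) v = #s := by
    rw [card_eq_sum_ones]
    exact sum_congr rfl fun v hv => Set.indicator_of_mem (mem_coe.2 hv) 1
  simp only [Pi.add_apply, sum_add_distrib, hone]

lemma filter_ne_zero_piAntidiag_card_add (s : Finset ι) (m : ℕ)
    [DecidablePred fun k : ι → ℕ => ∀ v ∈ s, k v ≠ 0] :
    {k ∈ s.piAntidiag (#s + m) | ∀ v ∈ s, k v ≠ 0} =
      (s.piAntidiag m).map (addLeftEmbedding ((s : Set ι).indicator 1)) := by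
  ext k
  simp only [mem_filter, mem_map, mem_piAntidiag, addLeftEmbedding_apply]
  constructor
  · rintro ⟨⟨hk, hsupp⟩, hpos⟩
    have hle : (s : Set ι).indicator 1 ≤ k :=
      Set.indicator_le' (fun v hv => Nat.one_le_iff_ne_zero.2 (hpos v hv)) fun v _ => (k v).zero_le
    obtain ⟨k', rfl⟩ := exists_add_of_le hle
    rw [sum_indicator_one_add] at hk
    refine ⟨k', ⟨Nat.add_left_cancel hk, fun v hv => hsupp v ?_⟩, rfl⟩
    exact (Nat.add_pos_right _ (Nat.pos_of_ne_zero hv)).ne'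
  · rintro ⟨k', ⟨hk', hsupp⟩, rfl⟩
    refine ⟨⟨by rw [sum_indicator_one_add, hk'], fun v hv => ?_⟩, fun v hv => by simp [hv]⟩
    by_contra hvs
    exact hv (by simpa [hvs] using mt (hsupp v) hvs)

/-- The exponent vector `(s : Set ι).indicator 1 + Pi.single j 1`, which for `j ∈ s` is `2` at `j`,
`1` on the rest of `s` and `0` elsewhere. It describes the monomials of degree `#s + 1` involving
every variable indexed by `s`. -/
noncomputable def excessExponent (s : Finset ι) (j : ι) : ι → ℕ :=
  (s : Set ι).indicator 1 + Pi.single j 1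

lemma sum_piAntidiag_card_add_one {M : Type*} [AddCommMonoid M] (s : Finset ι) (f : (ι → ℕ) → M)
    (hf : ∀ k ∈ s.piAntidiag (#s + 1), ∀ v ∈ s, k v = 0 → f k = 0) :
    ∑ k ∈ s.piAntidiag (#s + 1), f k = ∑ j ∈ s, f (excessExponent s j) := by
  have hpos : ∑ k ∈ s.piAntidiag (#s + 1) with ∀ v ∈ s, k v ≠ 0, f k =
      ∑ k ∈ s.piAntidiag (#s + 1), f k :=
    sum_filter_of_ne fun k hk hfk v hv => mt (hf k hk v hv) hfk
  rw [← hpos, filter_ne_zero_piAntidiag_card_add, piAntidiag_one, sum_map, sum_map]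
  rfl

lemma excessExponent_apply {s : Finset ι} {j v : ι} (hj : j ∈ s) :
    excessExponent s j v = if v ∈ s then if v = j then 2 else 1 else 0 := by
  obtain rfl | hv := eq_or_ne v j
  · simp [excessExponent, hj]
  · simp [excessExponent, hv, Set.indicator_apply]

lemma two_mul_multinomial_excessExponent {s : Finset ι} {j : ι} (hj : j ∈ s) :
    2 * Nat.multinomial s (excessExponent s j) = (#s + 1)! := by
  have hsum : ∑ v ∈ s, excessExponent s j v = #s + 1 := by
    rw [excessExponent, sum_indicator_one_add, sum_pi_single', if_pos hj]
  have hprod : ∏ v ∈ s, (excessExponent s j v)! = 2 := by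
    rw [prod_eq_single_of_mem j hj fun v hv hvj => by simp [excessExponent_apply hj, hv, hvj]]
    simp [excessExponent_apply hj, hj]
  rw [← hprod, Nat.multinomial_spec, hsum]

end PiAntidiag

lemma neg_one_pow_card_add_orbitCount {R X : Type*} [Ring R] [Fintype X] (τ : Equiv.Perm X) :
    (-1 : R) ^ (Fintype.card X + orbitCount τ) = ((sign τ : ℤ) : R) := by
  have hle : #τ.support ≤ Fintype.card X := card_le_univ _
  have hexp : Fintype.card X + orbitCount τ =
      #τ.support + τ.cycleType.card + 2 * (Fintype.card X - #τ.support) := by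
    rw [orbitCount]
    omega
  rw [hexp, pow_add, (even_two_mul _).neg_one_pow, mul_one, sign_of_cycleType, sum_cycleType]
  simp

section ColumnPow

/-- The matrix whose column `v` is the entrywise `k v`-th power of column `v` of `A`. When
`A r v = d(x_v, x_r)`, this column is `d_v^{(k v)}` in the notation of Roff–Yoshinaga; note that an
exponent `0` gives the all-ones column, including at zero entries of `A`. -/
def columnPow {R X : Type*} [Monoid R] (A : Matrix X X R) (k : X → ℕ) : Matrix X X R :=
  of fun r v => A r v ^ k v

variable {R X : Type*} [CommRing R] [Fintype X]

lemma sum_sign_mul_sum_pow (A : Matrix X X R) (s : Finset X) (m : ℕ) :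
    ∑ τ : Equiv.Perm X, ((sign τ : ℤ) : R) * (∑ v ∈ s, A (τ v) v) ^ m =
      ∑ k ∈ s.piAntidiag m, (Nat.multinomial s k : R) * (columnPow A k).det := by
  have hprod (τ : Equiv.Perm X) (k : X → ℕ) (hk : k ∈ s.piAntidiag m) :
      ∏ v ∈ s, A (τ v) v ^ k v = ∏ v, columnPow A k (τ v) v := by
    refine prod_subset (subset_univ s) fun v _ hv => ?_
    rw [Function.notMem_support.1 (mt ((mem_piAntidiag.1 hk).2 v) hv), pow_zero]
  simp_rw [sum_pow_eq_sum_piAntidiag, det_apply', mul_sum]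
  rw [sum_comm]
  refine sum_congr rfl fun k hk => sum_congr rfl fun τ _ => ?_
  rw [hprod τ k hk, mul_left_comm]

lemma det_columnPow_eq_zero (A : Matrix X X R) {k : X → ℕ} {y v : X} (hyv : y ≠ v)
    (hy : k y = 0) (hv : k v = 0) : (columnPow A k).det = 0 :=
  det_zero_of_column_eq hyv fun r => by simp only [columnPow, of_apply, hy, hv, pow_zero]

lemma two_mul_sum_sign_mul_sum_erase_pow_card (A : Matrix X X R) (y : X) :
    2 * ∑ τ : Equiv.Perm X, ((sign τ : ℤ) : R) *
        (∑ v ∈ univ.erase y, A (τ v) v) ^ Fintype.card X =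
      ((Fintype.card X)! : R) *
        ∑ j ∈ univ.erase y, (columnPow A (excessExponent (univ.erase y) j)).det := by
  have hcard : Fintype.card X = #(univ.erase y) + 1 := (card_erase_add_one (mem_univ y)).symm
  have hvanish (k : X → ℕ) (hk : k ∈ (univ.erase y).piAntidiag (#(univ.erase y) + 1)) (v : X)
      (hv : v ∈ univ.erase y) (hkv : k v = 0) :
      (Nat.multinomial (univ.erase y) k : R) * (columnPow A k).det = 0 := by
    have hky : k y = 0 := by_contra fun h => notMem_erase y univ ((mem_piAntidiag.1 hk).2 y h)
    rw [det_columnPow_eq_zero A (ne_of_mem_erase hv).symm hky hkv, mul_zero]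
  rw [sum_sign_mul_sum_pow, hcard, sum_piAntidiag_card_add_one _ _ hvanish, mul_sum, mul_sum]
  refine sum_congr rfl fun j hj => ?_
  rw [← two_mul_multinomial_excessExponent hj, Nat.cast_mul, Nat.cast_ofNat, mul_assoc]

lemma det_columnPow_excessExponent {ι : Type*} [Fintype ι] [DecidableEq ι] (d : X → X → R)
    (e : ι ≃ X) {i j : ι} (hj : j ≠ i) :
    (columnPow (of d)ᵀ (excessExponent (univ.erase (e i)) (e j))).det =
      (of fun r l : ι =>
        if l = i then 1 else if l = j then d (e j) (e r) ^ 2 else d (e l) (e r)).det := by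
  rw [← det_submatrix_equiv_self e]
  congr 1
  ext r l
  have hmem : e j ∈ univ.erase (e i) := by simpa using hj
  simp only [submatrix_apply, columnPow, of_apply, transpose_apply, excessExponent_apply hmem,
    mem_erase, mem_univ, and_true, e.injective.eq_iff, ne_eq]
  split_ifs <;> simp_all

end ColumnPow

theorem stmt19_general {R X : Type*} [CommRing R] [Fintype X] (d : X → X → R) (n : ℕ)
    (e : Fin n ≃ X) :
    2 * ∑ x : X, ∑ y : X, ∑ τ ∈ univ.filter (fun τ : Equiv.Perm X => τ y = x),
        (-1 : R) ^ (n + orbitCount τ) * (∑ v ∈ univ.erase y, d v (τ v)) ^ n =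
      (n ! : R) * ∑ i : Fin n, ∑ j ∈ univ.erase i,
        (of fun r l : Fin n =>
          if l = i then 1 else if l = j then d (e j) (e r) ^ 2 else d (e l) (e r)).det := by
  obtain rfl : n = Fintype.card X := by simpa using Fintype.card_congr e
  have hdet (i : Fin (Fintype.card X)) :
      ∑ j ∈ univ.erase i, (of fun r l =>
          if l = i then 1 else if l = j then d (e j) (e r) ^ 2 else d (e l) (e r)).det =
        ∑ j ∈ univ.erase (e i), (columnPow (of d)ᵀ (excessExponent (univ.erase (e i)) j)).det :=
    sum_equiv e (by simp) fun j hj =>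
      (det_columnPow_excessExponent d e (ne_of_mem_erase hj)).symm
  have hfiber (y : X) (F : Equiv.Perm X → R) :
      ∑ x : X, ∑ τ ∈ univ.filter (fun τ : Equiv.Perm X => τ y = x), F τ = ∑ τ, F τ :=
    sum_fiberwise _ (fun τ : Equiv.Perm X => τ y) F
  rw [sum_comm]
  simp_rw [hfiber, neg_one_pow_card_add_orbitCount, hdet]
  rw [e.sum_comp fun y =>
    ∑ j ∈ univ.erase y, (columnPow (of d)ᵀ (excessExponent (univ.erase y) j)).det, mul_sum, mul_sum]
  exact sum_congr rfl fun y _ => two_mul_sum_sign_mul_sum_erase_pow_card (of d)ᵀ y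

theorem stmt19 {X : Type*} [MetricSpace X] [Fintype X] (n : ℕ) (e : Fin n ≃ X) :
    ∑ x : X, ∑ y : X,
        ∑ τ ∈ Finset.univ.filter (fun τ : Equiv.Perm X => τ y = x),
          (-1 : ℝ) ^ (n + orbitCount τ) *
            (∑ v ∈ Finset.univ.erase y, dist v (τ v)) ^ n =
      (Nat.factorial n : ℝ) *
        ((1 / 2 : ℝ) *
          ∑ i : Fin n, ∑ j ∈ Finset.univ.erase i,
            (Matrix.of fun r l : Fin n =>
              if l = i then (1 : ℝ)
              else if l = j then dist (e j) (e r) ^ 2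
              else dist (e l) (e r)).det) := by
  linarith [stmt19_general (dist : X → X → ℝ) n e]
end
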